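/- arXiv:2504.19926 — 2 statements merged into one kernel-verified Lean document; each statement's English description precedes it below -/
import Mathlib

section
/- Let C₁ and C₂ be F_q-linear codes inside F_q^{t₁} × ⋯ × F_q^{t_l} and let C = (1−v)C₁ ⊕ vC₂ be an SGQC code of block length (t₁, …, t_l) over S. Then C is self-dual (C = C^⊥ with respect to the Euclidean inner product on 𝐒) if and only if C₁ and C₂ are both self-dual with respect to the Euclidean inner product over F_q. -/
/-!
By the Chinese remainder theorem `S ≅ F × F`: the evaluations `V ↦ 0` and `V ↦ 1` are ring
homomorphisms `S → F`, and `s = (1 - v) s(0) + v s(1)` for every `s` (`sring_decomp`). Applied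
coordinatewise, `z` lies in `(1 - v)C₁ ⊕ vC₂` exactly when `z(0) ∈ C₁` and `z(1) ∈ C₂`
(`mem_code_iff`). The inner product commutes with both evaluations, so likewise `z` lies in the
dual exactly when `z(0) ∈ C₁^⊥` and `z(1) ∈ C₂^⊥` (`mem_dual_iff`): the dual of a product of codes
is the product of the duals. Two such products agree if and only if their factors agree, since
all the factors contain `0`.
-/

open Polynomial

noncomputable section

/-- The ring `S = F[V]/(V² − V) = F + vF`. -/
abbrev Sring (F : Type) [Field F] : Type := AdjoinRoot (X ^ 2 - X : F[X])

/-- The element `v` (the image of `V`) in `S`, satisfying `v ^ 2 = v`. -/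
def vS (F : Type) [Field F] : Sring F := AdjoinRoot.root (X ^ 2 - X : F[X])

/-- The skew cyclic shift `σ(c₀, …, c_{n−1}) = (θ(c_{n−1}), θ(c₀), …, θ(c_{n−2}))`. -/
def sShift {R : Type} (θ : R → R) {n : ℕ} (c : Fin n → R) : Fin n → R :=
  fun i => θ (c ((finRotate n).symm i))

/-- The blockwise skew shift `σ_l`. -/
def blockShift {R : Type} (θ : R → R) {l : ℕ} {t : Fin l → ℕ}
    (c : ∀ j : Fin l, Fin (t j) → R) : ∀ j : Fin l, Fin (t j) → R :=
  fun j => sShift θ (c j)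

/-- `θ` is the Galois automorphism `a + v·b ↦ a^{p^t} + v·b^{p^t}` of `S`. -/
def IsGaloisAut (p t : ℕ) {F : Type} [Field F] (θ : RingAut (Sring F)) : Prop :=
  ∀ a b : F,
    θ (algebraMap F (Sring F) a + vS F * algebraMap F (Sring F) b) =
      algebraMap F (Sring F) (a ^ p ^ t) + vS F * algebraMap F (Sring F) (b ^ p ^ t)

/-- A set is an SGQC code iff it is (the carrier of) a submodule closed under `σ_l`. -/
def IsSGQC {R : Type} [CommRing R] (θ : R → R) {l : ℕ} {t : Fin l → ℕ}
    (C : Set (∀ j : Fin l, Fin (t j) → R)) : Prop :=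
  ∃ M : Submodule R (∀ j : Fin l, Fin (t j) → R),
    (M : Set (∀ j : Fin l, Fin (t j) → R)) = C ∧ ∀ c ∈ M, blockShift θ c ∈ M

/-- A set is a skew cyclic code iff it is (the carrier of) a submodule closed under `σ`. -/
def IsSkewCyclic {R : Type} [CommRing R] (θ : R → R) {n : ℕ} (K : Set (Fin n → R)) : Prop :=
  ∃ M : Submodule R (Fin n → R), (M : Set (Fin n → R)) = K ∧ ∀ x ∈ M, sShift θ x ∈ M

/-- The Euclidean inner product. -/
def euclidInner {R : Type} [CommRing R] {l : ℕ} {t : Fin l → ℕ}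
    (a b : ∀ j : Fin l, Fin (t j) → R) : R :=
  ∑ j, ∑ i, a j i * b j i

/-- The Hamming weight: the number of nonzero coordinates (over all blocks). -/
def hammingWt {R : Type} [CommRing R] {l : ℕ} {t : Fin l → ℕ}
    (x : ∀ j : Fin l, Fin (t j) → R) : ℕ :=
  ∑ j, Nat.card {i : Fin (t j) // x j i ≠ 0}

/-- The SGQC code generated by a set: the smallest submodule containing it closed under `σ_l`. -/
def sgqcGen {R : Type} [CommRing R] (θ : R → R) {l : ℕ} {t : Fin l → ℕ}
    (X : Set (∀ j : Fin l, Fin (t j) → R)) : Submodule R (∀ j : Fin l, Fin (t j) → R) :=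
  sInf {M | X ⊆ (M : Set _) ∧ ∀ c ∈ M, blockShift θ c ∈ M}

/-- The skew cyclic code generated by a set: the smallest submodule containing it closed under `σ`. -/
def scGen {R : Type} [CommRing R] (θ : R → R) {n : ℕ} (X : Set (Fin n → R)) :
    Submodule R (Fin n → R) :=
  sInf {M | X ⊆ (M : Set _) ∧ ∀ x ∈ M, sShift θ x ∈ M}

/-- The `w`-th Hermitian coefficient `H_w(u, v)`. -/
def hermCoeff {R : Type} [CommRing R] (θ : R → R) {l : ℕ} {t : Fin l → ℕ}
    (ht : ∀ j, 0 < t j) (w : ℕ) (u v : ∀ j : Fin l, Fin (t j) → R) : R :=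
  ∑ j, ∑ i : Fin (t j), u j ⟨((i : ℕ) + w) % t j, Nat.mod_lt _ (ht j)⟩ * θ^[w] (v j i)

/-- The `F`-algebra evaluation `S → F`, `V ↦ 0`. -/
def evZero (F : Type) [Field F] : Sring F →+* F :=
  AdjoinRoot.lift (RingHom.id F) 0 (by simp)

/-- The `F`-algebra evaluation `S → F`, `V ↦ 1`. -/
def evOne (F : Type) [Field F] : Sring F →+* F :=
  AdjoinRoot.lift (RingHom.id F) 1 (by simp)

section Evaluation

variable {F : Type} [Field F]

@[simp] lemma evZero_vS : evZero F (vS F) = 0 := AdjoinRoot.lift_root _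

@[simp] lemma evOne_vS : evOne F (vS F) = 1 := AdjoinRoot.lift_root _

@[simp] lemma evZero_algebraMap (a : F) : evZero F (algebraMap F (Sring F) a) = a := by
  rw [AdjoinRoot.algebraMap_eq]
  exact AdjoinRoot.lift_of _

@[simp] lemma evOne_algebraMap (a : F) : evOne F (algebraMap F (Sring F) a) = a := by
  rw [AdjoinRoot.algebraMap_eq]
  exact AdjoinRoot.lift_of _

@[simp] lemma evZero_of (a : F) : evZero F (AdjoinRoot.of (X ^ 2 - X : F[X]) a) = a :=
  AdjoinRoot.lift_of _

@[simp] lemma evOne_of (a : F) : evOne F (AdjoinRoot.of (X ^ 2 - X : F[X]) a) = a :=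
  AdjoinRoot.lift_of _

lemma vS_mul_self : vS F * vS F = vS F := by
  have h : AdjoinRoot.mk (X ^ 2 - X : F[X]) (X ^ 2 - X) = 0 := AdjoinRoot.mk_self
  rw [map_sub, map_pow, AdjoinRoot.mk_X, sub_eq_zero] at h
  exact (sq _).symm.trans h

lemma sring_decomp (s : Sring F) :
    s = (1 - vS F) * algebraMap F (Sring F) (evZero F s) +
      vS F * algebraMap F (Sring F) (evOne F s) := by
  induction s using AdjoinRoot.induction_on with
  | ih g =>
    induction g using Polynomial.induction_on with
    | C a =>
      rw [AdjoinRoot.mk_C, ← AdjoinRoot.algebraMap_eq, evZero_algebraMap, evOne_algebraMap]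
      ring
    | add f g hf hg =>
      simp only [map_add]
      linear_combination hf + hg
    | monomial n a _ =>
      have hv : ∀ k : ℕ, vS F ^ (k + 1) = vS F := by
        intro k
        induction k with
        | zero => simp
        | succ k ih => rw [pow_succ, ih, vS_mul_self]
      have h : AdjoinRoot.mk (X ^ 2 - X : F[X]) (C a * X ^ (n + 1)) =
          algebraMap F (Sring F) a * vS F := by
        rw [map_mul, map_pow, AdjoinRoot.mk_X, AdjoinRoot.mk_C, ← AdjoinRoot.algebraMap_eq]
        exact congrArg _ (hv n)
      rw [h]
      simp [mul_comm]

/-- Two elements of `S` agree as soon as both evaluations do. -/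
lemma sring_ext {s s' : Sring F} (h0 : evZero F s = evZero F s')
    (h1 : evOne F s = evOne F s') : s = s' := by
  rw [sring_decomp s, sring_decomp s', h0, h1]

end Evaluation

lemma map_euclidInner {R R' : Type} [CommRing R] [CommRing R'] (f : R →+* R') {l : ℕ}
    {t : Fin l → ℕ} (a b : ∀ j : Fin l, Fin (t j) → R) :
    f (euclidInner a b) = euclidInner (fun j i => f (a j i)) (fun j i => f (b j i)) := by
  simp [euclidInner]

section Codes

variable {F : Type} [Field F] {l : ℕ} {tt : Fin l → ℕ}

/-- The vector `(1 - v) x + v y` over `S`. -/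
def sComb (x y : ∀ j : Fin l, Fin (tt j) → F) : ∀ j : Fin l, Fin (tt j) → Sring F :=
  fun j i => (1 - vS F) * algebraMap F (Sring F) (x j i) + vS F * algebraMap F (Sring F) (y j i)

/-- The coordinatewise evaluation `V ↦ 0`. -/
def vecZero (z : ∀ j : Fin l, Fin (tt j) → Sring F) : ∀ j : Fin l, Fin (tt j) → F :=
  fun j i => evZero F (z j i)

/-- The coordinatewise evaluation `V ↦ 1`. -/
def vecOne (z : ∀ j : Fin l, Fin (tt j) → Sring F) : ∀ j : Fin l, Fin (tt j) → F :=
  fun j i => evOne F (z j i)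

@[simp] lemma vecZero_sComb (x y : ∀ j : Fin l, Fin (tt j) → F) : vecZero (sComb x y) = x := by
  funext j i
  simp [vecZero, sComb]

@[simp] lemma vecOne_sComb (x y : ∀ j : Fin l, Fin (tt j) → F) : vecOne (sComb x y) = y := by
  funext j i
  simp [vecOne, sComb]

lemma sComb_vec (z : ∀ j : Fin l, Fin (tt j) → Sring F) : sComb (vecZero z) (vecOne z) = z := by
  funext j i
  exact (sring_decomp (z j i)).symm

lemma mem_code_iff (C₁ C₂ : Submodule F (∀ j : Fin l, Fin (tt j) → F))
    (z : ∀ j : Fin l, Fin (tt j) → Sring F) :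
    (∃ x ∈ C₁, ∃ y ∈ C₂, z = sComb x y) ↔ vecZero z ∈ C₁ ∧ vecOne z ∈ C₂ := by
  constructor
  · rintro ⟨x, hx, y, hy, rfl⟩
    simp [hx, hy]
  · rintro ⟨h0, h1⟩
    exact ⟨_, h0, _, h1, (sComb_vec z).symm⟩

lemma euclidInner_eq_zero_iff (a c : ∀ j : Fin l, Fin (tt j) → Sring F) :
    euclidInner a c = 0 ↔
      euclidInner (vecZero a) (vecZero c) = 0 ∧ euclidInner (vecOne a) (vecOne c) = 0 := by
  have h0 := map_euclidInner (evZero F) a c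
  have h1 := map_euclidInner (evOne F) a c
  constructor
  · intro h
    rw [h, map_zero] at h0 h1
    exact ⟨h0.symm, h1.symm⟩
  · rintro ⟨k0, k1⟩
    exact sring_ext ((h0.trans k0).trans (map_zero _).symm) ((h1.trans k1).trans (map_zero _).symm)

lemma mem_dual_iff (C₁ C₂ : Submodule F (∀ j : Fin l, Fin (tt j) → F))
    (a : ∀ j : Fin l, Fin (tt j) → Sring F) :
    (∀ c, (∃ x ∈ C₁, ∃ y ∈ C₂, c = sComb x y) → euclidInner a c = 0) ↔
      (∀ x ∈ C₁, euclidInner (vecZero a) x = 0) ∧ ∀ y ∈ C₂, euclidInner (vecOne a) y = 0 := by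
  constructor
  · intro h
    constructor
    · intro x hx
      simpa using ((euclidInner_eq_zero_iff _ _).1 (h _ ⟨x, hx, 0, C₂.zero_mem, rfl⟩)).1
    · intro y hy
      simpa using ((euclidInner_eq_zero_iff _ _).1 (h _ ⟨0, C₁.zero_mem, y, hy, rfl⟩)).2
  · rintro ⟨h0, h1⟩ _ ⟨x, hx, y, hy, rfl⟩
    rw [euclidInner_eq_zero_iff, vecZero_sComb, vecOne_sComb]
    exact ⟨h0 x hx, h1 y hy⟩

end Codes

/-- `C = (1−v)C₁ ⊕ vC₂` (an SGQC code over `S`) is self-dual iff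
`C₁` and `C₂` are both self-dual over `F_q`. -/
theorem statement2 (p d t : ℕ) [Fact p.Prime] (hd : 0 < d)
    (F : Type) [Field F] [Fintype F] (hF : Fintype.card F = p ^ d)
    (θ : RingAut (Sring F)) (hθ : IsGaloisAut p t θ)
    (l : ℕ) (tt : Fin l → ℕ) (htt : ∀ j, 0 < tt j)
    (C₁ C₂ : Submodule F (∀ j : Fin l, Fin (tt j) → F))
    (Cset : Set (∀ j : Fin l, Fin (tt j) → Sring F))
    (hCset : Cset = {z : ∀ j : Fin l, Fin (tt j) → Sring F |
        ∃ x ∈ C₁, ∃ y ∈ C₂, z = fun j i =>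
          (1 - vS F) * algebraMap F (Sring F) (x j i) +
            vS F * algebraMap F (Sring F) (y j i)})
    (hSGQC : IsSGQC (⇑θ) Cset) :
    (Cset = {a : ∀ j : Fin l, Fin (tt j) → Sring F | ∀ c ∈ Cset, euclidInner a c = 0}) ↔
      ((C₁ : Set (∀ j : Fin l, Fin (tt j) → F)) =
          {a : ∀ j : Fin l, Fin (tt j) → F | ∀ c ∈ C₁, euclidInner a c = 0} ∧
        (C₂ : Set (∀ j : Fin l, Fin (tt j) → F)) =
          {a : ∀ j : Fin l, Fin (tt j) → F | ∀ c ∈ C₂, euclidInner a c = 0}) := by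
  have hmem : ∀ z, z ∈ Cset ↔ ∃ x ∈ C₁, ∃ y ∈ C₂, z = sComb x y := by
    intro z
    rw [hCset]
    rfl
  have hz : ∀ c : ∀ j : Fin l, Fin (tt j) → F, euclidInner 0 c = 0 := by
    intro c
    simp [euclidInner]
  simp only [Set.ext_iff, Set.mem_ofPred_eq, hmem, mem_dual_iff, SetLike.mem_coe]
  simp only [mem_code_iff]
  constructor
  · intro h
    constructor
    · intro x
      simpa [hz] using h (sComb x 0)
    · intro y
      simpa [hz] using h (sComb 0 y)
  · rintro ⟨h0, h1⟩ z
    rw [h0, h1]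
end
end

section
/- Let M = lcm(m_t, t₁, …, t_l), where m_t is the multiplicative order of θ_t. Then for all s, c ∈ 𝐒 = S^{t₁} × ⋯ × S^{t_l}, the Euclidean inner product satisfies ⟨σ_l(s), c⟩ = θ_t(⟨s, σ_l^{M−1}(c)⟩). -/
/-!
The blockwise shift `σ_l` is `θ`-semilinear and permutes coordinates, so it satisfies
`⟨σ_l(s), σ_l(c)⟩ = θ⟨s, c⟩` (`euclidInner_blockShift`). On the `j`-th block its `k`-th iterate
applies `θ ^ k` and rotates by `k` places, so `σ_l^M = id` because both `orderOf θ` and every `t_j`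
divide `M` (`blockShift_iterate_eq`). Since `S` is finite, `θ` has finite order and `M > 0`, so
`c = σ_l(σ_l^{M-1}(c))` and the claim is the semilinear identity for `s` and `σ_l^{M-1}(c)`.
-/

open Polynomial

noncomputable section

lemma finRotate_pow_self (n : ℕ) : finRotate n ^ n = 1 := by
  match n with
  | 0 => rfl
  | 1 => exact Subsingleton.elim _ _
  | n + 2 =>
    have h : orderOf (finRotate (n + 2)) = n + 2 := by
      rw [isCycle_finRotate.orderOf, support_finRotate, Finset.card_univ, Fintype.card_fin]
    exact orderOf_dvd_iff_pow_eq_one.mp (dvd_of_eq h)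

lemma blockShift_iterate_apply {R : Type} [CommRing R] (θ : RingAut R) {l : ℕ} {t : Fin l → ℕ}
    (k : ℕ) (c : ∀ j : Fin l, Fin (t j) → R) (j : Fin l) (i : Fin (t j)) :
    (blockShift (⇑θ))^[k] c j i = (θ ^ k) (c j ((finRotate (t j) ^ k)⁻¹ i)) := by
  induction k generalizing i with
  | zero => simp
  | succ k ih =>
    rw [Function.iterate_succ_apply']
    change θ ((blockShift (⇑θ))^[k] c j ((finRotate (t j))⁻¹ i)) = _
    rw [ih, pow_succ' θ, pow_succ' (finRotate (t j)), mul_inv_rev, RingAut.mul_apply,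
      Equiv.Perm.mul_apply]

lemma blockShift_iterate_eq {R : Type} [CommRing R] (θ : RingAut R) {l : ℕ} {t : Fin l → ℕ}
    {k : ℕ} (hθ : orderOf θ ∣ k) (ht : ∀ j, t j ∣ k) (c : ∀ j : Fin l, Fin (t j) → R) :
    (blockShift (⇑θ))^[k] c = c := by
  funext j i
  obtain ⟨m, hm⟩ := ht j
  have h : finRotate (t j) ^ k = 1 := by rw [hm, pow_mul, finRotate_pow_self, one_pow]
  rw [blockShift_iterate_apply, orderOf_dvd_iff_pow_eq_one.mp hθ, h]
  simp

lemma euclidInner_blockShift {R : Type} [CommRing R] (θ : RingAut R) {l : ℕ} {t : Fin l → ℕ}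
    (s c : ∀ j : Fin l, Fin (t j) → R) :
    euclidInner (blockShift (⇑θ) s) (blockShift (⇑θ) c) = θ (euclidInner s c) := by
  simp only [euclidInner, blockShift, sShift, map_sum, map_mul]
  exact Finset.sum_congr rfl fun j _ =>
    Equiv.sum_comp (finRotate (t j)).symm fun i => θ (s j i) * θ (c j i)

/-- Finiteness holds because `V² − V` is monic, so `S` is a finitely generated `F`-module. -/
lemma finite_Sring (F : Type) [Field F] [Finite F] : Finite (Sring F) := by
  have hm : (X ^ 2 - X : F[X]).Monic := by monicity!
  have := hm.finite_adjoinRoot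
  exact Module.finite_of_finite F

/-- With `M = lcm(m_t, t₁, …, t_l)`, for all `s, c ∈ 𝐒` one has
`⟨σ_l(s), c⟩ = θ_t(⟨s, σ_l^{M−1}(c)⟩)`. -/
theorem statement4 (p d t : ℕ) [Fact p.Prime] (hd : 0 < d)
    (F : Type) [Field F] [Fintype F] (hF : Fintype.card F = p ^ d)
    (θ : RingAut (Sring F)) (hθ : IsGaloisAut p t θ)
    (l : ℕ) (tt : Fin l → ℕ) (htt : ∀ j, 0 < tt j)
    (M : ℕ) (hM : M = Nat.lcm (orderOf θ) (Finset.univ.lcm tt)) :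
    ∀ s c : ∀ j : Fin l, Fin (tt j) → Sring F,
      euclidInner (blockShift (⇑θ) s) c =
        θ (euclidInner s ((blockShift (⇑θ))^[M - 1] c)) := by
  intro s c
  have := finite_Sring F
  have : Finite (RingAut (Sring F)) :=
    Finite.of_injective (fun f : RingAut (Sring F) => (f : Sring F → Sring F))
      DFunLike.coe_injective
  have hM0 : 0 < M := by
    rw [hM]
    refine Nat.lcm_pos (orderOf_pos θ) (Nat.pos_of_ne_zero fun h => ?_)
    obtain ⟨j, -, hj⟩ := Finset.lcm_eq_zero_iff.mp h
    exact (htt j).ne' hj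
  have hc : blockShift (⇑θ) ((blockShift (⇑θ))^[M - 1] c) = c := by
    rw [← Function.iterate_succ_apply' (blockShift (⇑θ)), Nat.succ_eq_add_one,
      Nat.sub_add_cancel hM0]
    refine blockShift_iterate_eq θ (hM ▸ Nat.dvd_lcm_left _ _) (fun j => ?_) c
    exact (Finset.dvd_lcm (Finset.mem_univ j)).trans (hM ▸ Nat.dvd_lcm_right _ _)
  rw [← euclidInner_blockShift, hc]
end
end
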